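/- Let (A, φ) be a noncommutative probability space with monotone cumulants {h_n} and Boolean cumulants {b_n}. Then for every n ≥ 1 and all a_1,…,a_n ∈ A, h_n(a_1,…,a_n) = Σ_{π ∈ NC_irr(n)} ω(t(π)) · b_π(a_1,…,a_n). -/

import Mathlib

open scoped BigOperators

/-- Planar rooted trees (rose trees). -/
inductive PTree : Type
  | node : List PTree → PTree

namespace PTree

/-- The single-vertex tree (a leaf). -/
abbrev leaf : PTree := .node []

/-- Subtree at a given path from the root (entries select children). -/
def subtreeAt : List ℕ → PTree → Option PTree
  | [], t => some t
  | i :: p, node cs => (cs[i]?).bind (subtreeAt p)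

/-- `p` is (the path of) a vertex of `t`. -/
def IsVertex (t : PTree) (p : List ℕ) : Prop := (subtreeAt p t).isSome

/-- `p` is a leaf of `t`. -/
def IsLeafAt (t : PTree) (p : List ℕ) : Prop := subtreeAt p t = some leaf

/-- `p` is an internal (non-leaf) vertex of `t`. -/
def IsInternalAt (t : PTree) (p : List ℕ) : Prop :=
  ∃ cs, subtreeAt p t = some (node cs) ∧ cs ≠ []

/-- Schröder trees: every internal vertex has at least two children. -/
inductive IsSchroder : PTree → Prop
  | leaf : IsSchroder (node [])
  | node (cs : List PTree) : 2 ≤ cs.length → (∀ c ∈ cs, IsSchroder c) → IsSchroder (node cs)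

/-- Number of leaves of a tree. -/
noncomputable def numLeaves (t : PTree) : ℕ := Nat.card {p : List ℕ // IsLeafAt t p}

/-- Number of sectors between consecutive leaves. -/
noncomputable def numSectors (t : PTree) : ℕ := numLeaves t - 1

/-- Number of internal vertices. -/
noncomputable def numInternal (t : PTree) : ℕ := Nat.card {p : List ℕ // IsInternalAt t p}

/-- The set of Schröder trees with `n+1` leaves. -/
def ST (n : ℕ) : Set PTree := {t | IsSchroder t ∧ numLeaves t = n + 1}

/-- Number of surjective strictly order-preserving maps from the poset of internal
vertices of `t` (i.e. the vertex poset of the skeleton `sk(t)`, with the root minimal,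
the order being the ancestor/prefix order) onto `{1, …, k}`. This is `ω_k(sk(t))`. -/
noncomputable def omegaSkK (t : PTree) (k : ℕ) : ℕ :=
  Nat.card {f : {p : List ℕ // IsInternalAt t p} → Fin k //
    Function.Surjective f ∧ ∀ v w, v.1 <+: w.1 → v ≠ w → f v < f w}

/-- The Murua coefficient `ω(sk(t))` of the skeleton of `t`. -/
noncomputable def omegaSk (t : PTree) : ℂ :=
  ∑ k ∈ Finset.Icc 1 (numInternal t), ((-1 : ℂ) ^ (k + 1) / (k : ℂ)) * (omegaSkK t k : ℂ)

/-- The subtree of `t` at path `p` (junk value: a leaf). -/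
noncomputable def subtree! (t : PTree) (p : List ℕ) : PTree := (subtreeAt p t).getD leaf

/-- Number of leaves of `t` strictly to the left of the subtree at `p`. -/
noncomputable def leavesBefore (t : PTree) (p : List ℕ) : ℕ :=
  Nat.card {q : List ℕ // IsLeafAt t q ∧ List.Lex (· < ·) q p ∧ ¬ p <+: q}

/-- Sector number `i` (0-indexed: the sector between the `(i+1)`-st and `(i+2)`-nd leaves of `t`)
lies strictly inside the subtree of `t` rooted at `p`. -/
def SectorIn (t : PTree) (p : List ℕ) (i : ℕ) : Prop :=
  leavesBefore t p ≤ i ∧ i + 2 ≤ leavesBefore t p + numLeaves (subtree! t p)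

/-- The internal vertex `v` of `t` owns sector `i`: the sector lies in the corolla at `v`,
i.e. inside the subtree at `v` but not inside the subtree at any strictly deeper vertex. -/
def OwnsSector (t : PTree) (v : List ℕ) (i : ℕ) : Prop :=
  IsInternalAt t v ∧ SectorIn t v i ∧
    ∀ w, IsInternalAt t w → v <+: w → w ≠ v → ¬ SectorIn t w i

/-- Sectors `i` and `j` belong to the same block of the noncrossing partition `π(t)`. -/
def SameOwner (t : PTree) (i j : ℕ) : Prop := ∃ v, OwnsSector t v i ∧ OwnsSector t v j

open Classical in
/-- `φ_{π(t)}(a_1,…,a_n)`: the product over the blocks of the noncrossing partition `π(t)`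
(one block per internal vertex `v`, consisting of the sectors owned by `v`) of `φ` applied to
the ordered product of the corresponding letters of `w`. -/
noncomputable def phiPi {A : Type*} [Ring A] (φ : A → ℂ) (t : PTree) (w : List A) : ℂ :=
  ∏ᶠ v ∈ {v : List ℕ | IsInternalAt t v},
    φ ((((List.range w.length).filter fun i => OwnsSector t v i).map fun i => w.getD i 0).prod)

/-- A corolla: a root whose (at least two) children are all leaves. -/
def corolla (m : ℕ) : PTree := node (List.replicate m leaf)

/-- `t` is a corolla. -/
def IsCorolla (t : PTree) : Prop := ∃ m, 2 ≤ m ∧ t = corolla m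

/-- Graft a tree `s` onto the leftmost leaf of `t`. -/
def graftLeftmost : PTree → PTree → PTree
  | node [], s => s
  | node (c :: cs), s => node (graftLeftmost c s :: cs)

/-- Trees obtained from the single-vertex tree by repeatedly grafting a corolla
onto the leftmost leaf. -/
inductive IsBST : PTree → Prop
  | single : IsBST leaf
  | graft (t : PTree) (m : ℕ) : IsBST t → 2 ≤ m → IsBST (graftLeftmost t (corolla m))

/-- Schröder trees whose leftmost child of the root is a leaf. -/
def IsPST (t : PTree) : Prop := ∃ cs, t = node (leaf :: cs)

end PTree
section Partitions

open scoped BigOperators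

/-- Set partitions of `[n] = {1,…,n}`, modeled as finpartitions of `Fin n`. -/
abbrev NPart (n : ℕ) := Finpartition (Finset.univ : Finset (Fin n))

/-- Noncrossing partitions: there are no `a < b < c < d` with `a, c` in one block and
`b, d` in a different block. -/
def IsNoncrossing {n : ℕ} (π : NPart n) : Prop :=
  ∀ a b c d : Fin n, a < b → b < c → c < d →
    ∀ V ∈ π.parts, ∀ W ∈ π.parts, a ∈ V → c ∈ V → b ∈ W → d ∈ W → V = W

/-- Interval partitions: every block is an interval of consecutive elements. -/
def IsIntervalPart {n : ℕ} (π : NPart n) : Prop :=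
  ∀ V ∈ π.parts, ∀ x ∈ V, ∀ y ∈ V, ∀ z : Fin n, x ≤ z → z ≤ y → z ∈ V

/-- Irreducible noncrossing partitions: `1` and `n` lie in the same block. -/
def IsIrreducibleNC {n : ℕ} (π : NPart n) : Prop :=
  ∃ V ∈ π.parts, (∀ i : Fin n, i.val = 0 → i ∈ V) ∧ (∀ i : Fin n, i.val = n - 1 → i ∈ V)

/-- `W` is nested in `V`: every element of `W` lies in the interval `[min V, max V]`. -/
def NestedIn {n : ℕ} (W V : Finset (Fin n)) : Prop :=
  ∀ w ∈ W, (∃ a ∈ V, a ≤ w) ∧ (∃ b ∈ V, w ≤ b)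

open Classical in
/-- The forest factorial `t(π)!` of the forest of nestings of `π`: the product, over all
blocks `V`, of the number of blocks nested in `V` (the size of the subtree rooted at `V`). -/
noncomputable def forestFactorial {n : ℕ} (π : NPart n) : ℕ :=
  ∏ V ∈ π.parts, (π.parts.filter fun W => NestedIn W V).card

/-- `f_π(a_1,…,a_n)`: the product over the blocks `V = {i_1 < … < i_s}` of `π` of
`f(a_{i_1},…,a_{i_s})`, for a family of multilinear functionals encoded as `f : List A → ℂ`. -/
noncomputable def blockApply {A : Type*} {n : ℕ} (f : List A → ℂ) (a : Fin n → A)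
    (π : NPart n) : ℂ :=
  ∏ V ∈ π.parts, f ((V.sort (· ≤ ·)).map a)

/-- `φ_π(a_1,…,a_n)` for the moment functionals `φ_m(a_1,…,a_m) = φ(a_1 ⋯ a_m)`. -/
noncomputable def momApply {A : Type*} [Ring A] {n : ℕ} (φ : A → ℂ) (a : Fin n → A)
    (π : NPart n) : ℂ :=
  blockApply (fun l => φ l.prod) a π

/-- `ω_k(t(π))` for the nesting poset of the blocks of `π` (for irreducible `π`, this is
the vertex poset of the tree of nestings, rooted at the outermost block): the number of
surjective strictly order-preserving maps onto `{1,…,k}`. -/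
noncomputable def omegaNestK {n : ℕ} (π : NPart n) (k : ℕ) : ℕ :=
  Nat.card {f : {V // V ∈ π.parts} → Fin k // Function.Surjective f ∧
    ∀ V W : {V // V ∈ π.parts}, NestedIn W.1 V.1 → V ≠ W → f V < f W}

/-- The Murua coefficient `ω(t(π))` of the tree (forest) of nestings of `π`. -/
noncomputable def omegaNest {n : ℕ} (π : NPart n) : ℂ :=
  ∑ k ∈ Finset.Icc 1 π.parts.card, ((-1 : ℂ) ^ (k + 1) / (k : ℂ)) * (omegaNestK π k : ℂ)

/-- The noncrossing partition `π(t)` associated to a Schröder tree `t ∈ ST(n)` equals `π`: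
two sectors lie in the same block of `π(t)` (i.e. have the same owning internal vertex)
iff they lie in the same block of `π`. -/
def TreePartEq {n : ℕ} (t : PTree) (π : NPart n) : Prop :=
  ∀ i j : Fin n, PTree.SameOwner t i.val j.val ↔ ∃ V ∈ π.parts, i ∈ V ∧ j ∈ V

/-- The moment–cumulant relation defining the monotone cumulants `h`. -/
def MonotoneMC {A : Type*} [Ring A] (φ : A → ℂ) (h : List A → ℂ) : Prop :=
  ∀ (m : ℕ), 1 ≤ m → ∀ a : Fin m → A,
    φ (List.ofFn a).prod =
      ∑ᶠ π ∈ {π : NPart m | IsNoncrossing π}, (forestFactorial π : ℂ)⁻¹ * blockApply h a π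

/-- The moment–cumulant relation defining the free cumulants `r`. -/
def FreeMC {A : Type*} [Ring A] (φ : A → ℂ) (r : List A → ℂ) : Prop :=
  ∀ (m : ℕ), 1 ≤ m → ∀ a : Fin m → A,
    φ (List.ofFn a).prod = ∑ᶠ π ∈ {π : NPart m | IsNoncrossing π}, blockApply r a π

/-- The moment–cumulant relation defining the Boolean cumulants `b`. -/
def BooleanMC {A : Type*} [Ring A] (φ : A → ℂ) (b : List A → ℂ) : Prop :=
  ∀ (m : ℕ), 1 ≤ m → ∀ a : Fin m → A,
    φ (List.ofFn a).prod = ∑ᶠ π ∈ {π : NPart m | IsIntervalPart π}, blockApply b a π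

end Partitions

section NoncrossingFamilies

open Finset

variable {n : ℕ}

/-- No element of `S` lies strictly between two elements of `B`. -/
def Unsplit (S B : Finset (Fin n)) : Prop :=
  ∀ x ∈ B, ∀ y ∈ B, ∀ s ∈ S, x < s → ¬ s < y

/-- `P` is the set of blocks of a noncrossing partition of `U`, none of whose blocks is split
by an element of `S`. -/
structure IsNCFamily (U S : Finset (Fin n)) (P : Finset (Finset (Fin n))) : Prop where
  nonempty : ∀ B ∈ P, B.Nonempty
  eq_of_mem : ∀ B ∈ P, ∀ C ∈ P, ∀ x ∈ B, x ∈ C → B = C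
  mem_iff : ∀ x, x ∈ U ↔ ∃ B ∈ P, x ∈ B
  noncrossing : ∀ a b c d : Fin n, a < b → b < c → c < d →
    ∀ V ∈ P, ∀ W ∈ P, a ∈ V → c ∈ V → b ∈ W → d ∈ W → V = W
  unsplit : ∀ B ∈ P, Unsplit S B

open Classical in
/-- The finite set of all families `P` with `IsNCFamily U S P`. -/
noncomputable def ncFamilies (U S : Finset (Fin n)) : Finset (Finset (Finset (Fin n))) :=
  univ.filter (IsNCFamily U S)

lemma mem_ncFamilies {U S : Finset (Fin n)} {P : Finset (Finset (Fin n))} :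
    P ∈ ncFamilies U S ↔ IsNCFamily U S P := by
  simp [ncFamilies]

/-- `D` contains every block of `P` in which one of its members is nested. -/
def OuterClosed (P D : Finset (Finset (Fin n))) : Prop :=
  ∀ V ∈ D, ∀ W ∈ P, NestedIn V W → W ∈ D

open Classical in
/-- The outer closed subfamilies of `P`. -/
noncomputable def outerClosed (P : Finset (Finset (Fin n))) :
    Finset (Finset (Finset (Fin n))) :=
  P.powerset.filter (OuterClosed P)

lemma mem_outerClosed {P D : Finset (Finset (Fin n))} :
    D ∈ outerClosed P ↔ D ⊆ P ∧ OuterClosed P D := by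
  simp [outerClosed]

lemma IsNCFamily.subset {U S : Finset (Fin n)} {P : Finset (Finset (Fin n))}
    (hP : IsNCFamily U S P) {B : Finset (Fin n)} (hB : B ∈ P) : B ⊆ U :=
  fun x hx => (hP.mem_iff x).2 ⟨B, hB, hx⟩

/-- A block of a noncrossing family with an element strictly inside the hull of another block is
nested in that block. -/
lemma IsNCFamily.nestedIn_of_between {U S : Finset (Fin n)} {P : Finset (Finset (Fin n))}
    (hP : IsNCFamily U S P) {V B : Finset (Fin n)} (hV : V ∈ P) (hB : B ∈ P)
    {x y v : Fin n} (hx : x ∈ B) (hy : y ∈ B) (hv : v ∈ V) (hxv : x < v) (hvy : v < y) :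
    NestedIn V B := by
  by_cases hVB : V = B
  · subst hVB
    exact fun w hw => ⟨⟨w, hw, le_rfl⟩, ⟨w, hw, le_rfl⟩⟩
  intro w hw
  refine ⟨⟨x, hx, ?_⟩, ⟨y, hy, ?_⟩⟩
  · by_contra hlt
    exact hVB (hP.noncrossing w x v y (not_le.1 hlt) hxv hvy V hV B hB hw hv hx hy)
  · by_contra hlt
    exact hVB (hP.noncrossing x v y w hxv hvy (not_le.1 hlt) B hB V hV hx hy hv hw).symm

lemma IsNCFamily.outer {U S : Finset (Fin n)} {P D : Finset (Finset (Fin n))}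
    (hP : IsNCFamily U S P) (hD : D ⊆ P) : IsNCFamily (D.biUnion id) S D where
  nonempty B hB := hP.nonempty B (hD hB)
  eq_of_mem B hB C hC := hP.eq_of_mem B (hD hB) C (hD hC)
  mem_iff x := by simp
  noncrossing a b c d hab hbc hcd V hV W hW :=
    hP.noncrossing a b c d hab hbc hcd V (hD hV) W (hD hW)
  unsplit B hB := hP.unsplit B (hD hB)

lemma IsNCFamily.inner {U S : Finset (Fin n)} {P D : Finset (Finset (Fin n))}
    (hP : IsNCFamily U S P) (hD : D ⊆ P) (hD' : OuterClosed P D) :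
    IsNCFamily (U \ D.biUnion id) (S ∪ D.biUnion id) (P \ D) where
  nonempty B hB := hP.nonempty B (mem_sdiff.1 hB).1
  eq_of_mem B hB C hC := hP.eq_of_mem B (mem_sdiff.1 hB).1 C (mem_sdiff.1 hC).1
  mem_iff x := by
    simp only [mem_sdiff, mem_biUnion, id, hP.mem_iff]
    constructor
    · rintro ⟨⟨B, hB, hx⟩, h⟩
      exact ⟨B, ⟨hB, fun hBD => h ⟨B, hBD, hx⟩⟩, hx⟩
    · rintro ⟨B, ⟨hB, hBD⟩, hx⟩
      refine ⟨⟨B, hB, hx⟩, ?_⟩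
      rintro ⟨C, hC, hxC⟩
      exact hBD (hP.eq_of_mem B hB C (hD hC) x hx hxC ▸ hC)
  noncrossing a b c d hab hbc hcd V hV W hW :=
    hP.noncrossing a b c d hab hbc hcd V (mem_sdiff.1 hV).1 W (mem_sdiff.1 hW).1
  unsplit B hB x hx y hy s hs hxs hsy := by
    obtain ⟨hB, hBD⟩ := mem_sdiff.1 hB
    rcases mem_union.1 hs with hs | hs
    · exact hP.unsplit B hB x hx y hy s hs hxs hsy
    · obtain ⟨V, hV, hsV⟩ := mem_biUnion.1 hs
      exact hBD (hD' V hV B hB (hP.nestedIn_of_between (hD hV) hB hx hy hsV hxs hsy))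

lemma IsNCFamily.disjoint_of_sdiff {U S T : Finset (Fin n)} {P Q : Finset (Finset (Fin n))}
    (hP : IsNCFamily T S P) (hQ : IsNCFamily (U \ T) (S ∪ T) Q) : Disjoint P Q := by
  rw [Finset.disjoint_left]
  intro B hB hB'
  obtain ⟨x, hx⟩ := hP.nonempty B hB
  exact (mem_sdiff.1 (hQ.subset hB' hx)).2 (hP.subset hB hx)

lemma IsNCFamily.union {U S T : Finset (Fin n)} {P Q : Finset (Finset (Fin n))} (hT : T ⊆ U)
    (hP : IsNCFamily T S P) (hQ : IsNCFamily (U \ T) (S ∪ T) Q) : IsNCFamily U S (P ∪ Q) where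
  nonempty B hB := (mem_union.1 hB).elim (hP.nonempty B) (hQ.nonempty B)
  eq_of_mem B hB C hC x hx hx' := by
    rcases mem_union.1 hB with hB | hB <;> rcases mem_union.1 hC with hC | hC
    · exact hP.eq_of_mem B hB C hC x hx hx'
    · exact absurd (hP.subset hB hx) (mem_sdiff.1 (hQ.subset hC hx')).2
    · exact absurd (hP.subset hC hx') (mem_sdiff.1 (hQ.subset hB hx)).2
    · exact hQ.eq_of_mem B hB C hC x hx hx'
  mem_iff x := by
    have h1 := hP.mem_iff x
    have h2 := hQ.mem_iff x
    have h3 := @hT x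
    simp only [mem_sdiff, mem_union] at *
    constructor
    · intro hx
      by_cases hxT : x ∈ T
      · obtain ⟨B, hB, h⟩ := h1.1 hxT
        exact ⟨B, Or.inl hB, h⟩
      · obtain ⟨B, hB, h⟩ := h2.1 ⟨hx, hxT⟩
        exact ⟨B, Or.inr hB, h⟩
    · rintro ⟨B, hB | hB, h⟩
      · exact h3 (h1.2 ⟨B, hB, h⟩)
      · exact (h2.2 ⟨B, hB, h⟩).1
  noncrossing a b c d hab hbc hcd V hV W hW ha hc hb hd := by
    rcases mem_union.1 hV with hV | hV <;> rcases mem_union.1 hW with hW | hW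
    · exact hP.noncrossing a b c d hab hbc hcd V hV W hW ha hc hb hd
    · exact absurd hcd (hQ.unsplit W hW b hb d hd c (mem_union_right _ (hP.subset hV hc)) hbc)
    · exact absurd hbc (hQ.unsplit V hV a ha c hc b (mem_union_right _ (hP.subset hW hb)) hab)
    · exact hQ.noncrossing a b c d hab hbc hcd V hV W hW ha hc hb hd
  unsplit B hB x hx y hy s hs := by
    rcases mem_union.1 hB with hB | hB
    · exact hP.unsplit B hB x hx y hy s hs
    · exact hQ.unsplit B hB x hx y hy s (mem_union_left _ hs)

lemma IsNCFamily.outerClosed_union {U S T : Finset (Fin n)} {P Q : Finset (Finset (Fin n))}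
    (hP : IsNCFamily T S P) (hQ : IsNCFamily (U \ T) (S ∪ T) Q) : OuterClosed (P ∪ Q) P := by
  intro V hV W hW hVW
  rcases mem_union.1 hW with hW | hW
  · exact hW
  · obtain ⟨v, hv⟩ := hP.nonempty V hV
    have hvT := hP.subset hV hv
    obtain ⟨⟨x, hx, hxv⟩, ⟨y, hy, hvy⟩⟩ := hVW v hv
    have hne : ∀ z ∈ W, z ≠ v := by
      rintro z hz rfl
      exact (mem_sdiff.1 (hQ.subset hW hz)).2 hvT
    exact absurd (lt_of_le_of_ne hvy (hne y hy).symm)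
      (hQ.unsplit W hW x hx y hy v (mem_union_right _ hvT) (lt_of_le_of_ne hxv (hne x hx)))

lemma IsNCFamily.biUnion_eq {U S : Finset (Fin n)} {P : Finset (Finset (Fin n))}
    (hP : IsNCFamily U S P) : P.biUnion id = U := by
  ext x
  simp [hP.mem_iff]

/-- Cutting a noncrossing family along an outer closed subfamily. -/
lemma sum_outerClosed {M : Type*} [AddCommMonoid M] (U S : Finset (Fin n))
    (f : Finset (Finset (Fin n)) → Finset (Finset (Fin n)) → M) :
    ∑ P ∈ ncFamilies U S, ∑ D ∈ outerClosed P, f D (P \ D) =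
      ∑ T ∈ U.powerset, ∑ P ∈ ncFamilies T S, ∑ Q ∈ ncFamilies (U \ T) (S ∪ T), f P Q := by
  simp_rw [← Finset.sum_product']
  rw [Finset.sum_sigma', Finset.sum_sigma']
  refine Finset.sum_bij' (fun x _ => ⟨x.2.biUnion id, (x.2, x.1 \ x.2)⟩)
    (fun y _ => ⟨y.2.1 ∪ y.2.2, y.2.1⟩) ?_ ?_ ?_ ?_ ?_
  · rintro ⟨P, D⟩ hx
    simp only [mem_sigma, mem_outerClosed, mem_ncFamilies, mem_product, mem_powerset] at hx ⊢
    obtain ⟨hP, hD, hD'⟩ := hx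
    refine ⟨?_, hP.outer hD, hP.inner hD hD'⟩
    exact Finset.biUnion_subset.2 fun B hB => hP.subset (hD hB)
  · rintro ⟨T, P, Q⟩ hy
    simp only [mem_sigma, mem_outerClosed, mem_ncFamilies, mem_product, mem_powerset] at hy ⊢
    obtain ⟨hT, hP, hQ⟩ := hy
    exact ⟨hP.union hT hQ, subset_union_left, hP.outerClosed_union hQ⟩
  · rintro ⟨P, D⟩ hx
    simp only [mem_sigma, mem_outerClosed] at hx
    simp [Finset.union_sdiff_of_subset hx.2.1]
  · rintro ⟨T, P, Q⟩ hy
    simp only [mem_sigma, mem_ncFamilies, mem_product] at hy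
    obtain ⟨-, hP, hQ⟩ := hy
    have h1 := hP.biUnion_eq
    have h2 : (P ∪ Q) \ P = Q := by
      rw [Finset.union_sdiff_left, Finset.sdiff_eq_self_iff_disjoint]
      exact (hP.disjoint_of_sdiff hQ).symm
    simp only [h1, h2]
  · rintro ⟨P, D⟩ hx
    rfl

end NoncrossingFamilies

section TreeWeights

open Finset Polynomial

variable {n : ℕ}

/-- Polynomial weights on families of blocks which behave like the Butcher series of a one-parameter
semigroup of characters on forests of nestings: the derivative is obtained by cutting off an outer
subfamily weighted by its linear coefficient, and the linear coefficients vanish off trees. -/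
structure IsTreeWeight (W : Finset (Finset (Fin n)) → ℂ[X]) : Prop where
  empty : W ∅ = 1
  coeff_zero : ∀ P, P.Nonempty → (W P).coeff 0 = 0
  derivative_eq : ∀ U S P, IsNCFamily U S P →
    derivative (W P) = ∑ D ∈ outerClosed P, C ((W D).coeff 1) * W (P \ D)
  coeff_one_union : ∀ P Q, P.Nonempty → Q.Nonempty → Disjoint P Q →
    (∀ V ∈ P, ∀ B ∈ Q, ¬ NestedIn V B ∧ ¬ NestedIn B V) → (W (P ∪ Q)).coeff 1 = 0

/-- The sum of `f_P W(P)` over the noncrossing partitions `P` of `U` not split by `S`. -/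
noncomputable def ncSum (W : Finset (Finset (Fin n)) → ℂ[X]) (f : Finset (Fin n) → ℂ)
    (U S : Finset (Fin n)) : ℂ[X] :=
  ∑ P ∈ ncFamilies U S, C (∏ V ∈ P, f V) * W P

lemma isNCFamily_empty_iff {S : Finset (Fin n)} {P : Finset (Finset (Fin n))} :
    IsNCFamily ∅ S P ↔ P = ∅ := by
  constructor
  · intro h
    refine Finset.eq_empty_of_forall_notMem fun B hB => ?_
    obtain ⟨x, hx⟩ := h.nonempty B hB
    simpa using h.subset hB hx
  · rintro rfl
    constructor <;> simp

lemma ncFamilies_empty (S : Finset (Fin n)) : ncFamilies ∅ S = {∅} := by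
  ext P
  simp [mem_ncFamilies, isNCFamily_empty_iff]

lemma ncFamilies_eq_of_unsplit {U S : Finset (Fin n)} (h : Unsplit S U) :
    ncFamilies U S = ncFamilies U ∅ := by
  ext P
  simp only [mem_ncFamilies]
  constructor
  · exact fun hP => { hP with unsplit := fun B _ x _ y _ s hs => by simp at hs }
  · intro hP
    refine { hP with unsplit := fun B hB x hx y hy s hs => ?_ }
    exact h x (hP.subset hB hx) y (hP.subset hB hy) s hs

namespace IsTreeWeight

variable {W W' : Finset (Finset (Fin n)) → ℂ[X]} {f f' : Finset (Fin n) → ℂ}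

lemma ncSum_empty (hW : IsTreeWeight W) (S : Finset (Fin n)) : ncSum W f ∅ S = 1 := by
  simp [ncSum, ncFamilies_empty, hW.empty]

lemma coeff_zero_ncSum (hW : IsTreeWeight W) {U : Finset (Fin n)} (hU : U.Nonempty)
    (S : Finset (Fin n)) : (ncSum W f U S).coeff 0 = 0 := by
  rw [ncSum, finsetSum_coeff]
  refine Finset.sum_eq_zero fun P hP => ?_
  rw [mem_ncFamilies] at hP
  have : P.Nonempty := by
    obtain ⟨x, hx⟩ := hU
    obtain ⟨B, hB, -⟩ := (hP.mem_iff x).1 hx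
    exact ⟨B, hB⟩
  rw [coeff_C_mul, hW.coeff_zero P this, mul_zero]

lemma coeff_one_of_split (hW : IsTreeWeight W) {U S : Finset (Fin n)}
    {P : Finset (Finset (Fin n))} (hP : IsNCFamily U S P) (s : Fin n)
    (hs : ∀ B ∈ P, (∀ x ∈ B, x ≤ s) ∨ (∀ x ∈ B, s < x))
    (hle : ∃ x ∈ U, x ≤ s) (hlt : ∃ x ∈ U, s < x) : (W P).coeff 1 = 0 := by
  classical
  rw [← Finset.filter_union_filter_not_eq (fun B => ∀ x ∈ B, x ≤ s) P]
  apply hW.coeff_one_union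
  · obtain ⟨x, hx, hxs⟩ := hle
    obtain ⟨B, hB, hxB⟩ := (hP.mem_iff x).1 hx
    refine ⟨B, mem_filter.2 ⟨hB, (hs B hB).resolve_right fun h => ?_⟩⟩
    exact absurd (h x hxB) (not_lt.2 hxs)
  · obtain ⟨x, hx, hxs⟩ := hlt
    obtain ⟨B, hB, hxB⟩ := (hP.mem_iff x).1 hx
    exact ⟨B, mem_filter.2 ⟨hB, fun h => absurd hxs (not_lt.2 (h x hxB))⟩⟩
  · exact Finset.disjoint_filter_filter_not _ _ _
  · intro V hV B hB
    obtain ⟨hV, hVs⟩ := mem_filter.1 hV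
    obtain ⟨hB, hBs⟩ := mem_filter.1 hB
    have hBs := (hs B hB).resolve_left hBs
    obtain ⟨v, hv⟩ := hP.nonempty V hV
    obtain ⟨w, hw⟩ := hP.nonempty B hB
    constructor
    · intro h
      obtain ⟨⟨y, hy, hyv⟩, -⟩ := h v hv
      exact absurd ((hBs y hy).trans_le hyv) (not_lt.2 (hVs v hv))
    · intro h
      obtain ⟨-, ⟨y, hy, hwy⟩⟩ := h w hw
      exact absurd ((hBs w hw).trans_le hwy) (not_lt.2 (hVs y hy))

lemma coeff_one_ncSum_of_not_unsplit (hW : IsTreeWeight W) {U S : Finset (Fin n)}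
    (hUS : Disjoint U S) (h : ¬ Unsplit S U) : (ncSum W f U S).coeff 1 = 0 := by
  simp only [Unsplit, not_forall, not_not] at h
  obtain ⟨x, hx, y, hy, s, hs, hxs, hsy⟩ := h
  rw [ncSum, finsetSum_coeff]
  refine Finset.sum_eq_zero fun P hP => ?_
  rw [mem_ncFamilies] at hP
  rw [coeff_C_mul, hW.coeff_one_of_split hP s ?_ ⟨x, hx, hxs.le⟩ ⟨y, hy, hsy⟩, mul_zero]
  intro B hB
  by_contra! hcon
  obtain ⟨⟨u, hu, hsu⟩, ⟨v, hv, hvs⟩⟩ := hcon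
  have hne : v ≠ s := by
    rintro rfl
    exact Finset.disjoint_left.1 hUS (hP.subset hB hv) hs
  exact hP.unsplit B hB v hv u hu s hs (lt_of_le_of_ne hvs hne) hsu

lemma derivative_ncSum (hW : IsTreeWeight W) (U S : Finset (Fin n)) :
    derivative (ncSum W f U S) =
      ∑ T ∈ U.powerset, C ((ncSum W f T S).coeff 1) * ncSum W f (U \ T) (S ∪ T) := by
  have h := sum_outerClosed U S fun P Q =>
    (C (∏ V ∈ P, f V) * C ((W P).coeff 1)) * (C (∏ V ∈ Q, f V) * W Q)
  rw [ncSum, derivative_sum]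
  convert h using 1
  · refine Finset.sum_congr rfl fun P hP => ?_
    rw [mem_ncFamilies] at hP
    rw [derivative_C_mul, hW.derivative_eq U S P hP, Finset.mul_sum]
    refine Finset.sum_congr rfl fun D hD => ?_
    rw [← Finset.prod_sdiff (mem_outerClosed.1 hD).1, C_mul]
    ring
  · refine Finset.sum_congr rfl fun T _ => ?_
    simp only [ncSum, finsetSum_coeff, coeff_C_mul, map_sum, C_mul]
    rw [Finset.sum_mul_sum]

/-- Two families of functionals whose weighted sums agree at `1` have the same weighted sums. -/
theorem ncSum_eq (hW : IsTreeWeight W) (hW' : IsTreeWeight W')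
    (h1 : ∀ U : Finset (Fin n), U.Nonempty →
      (ncSum W f U ∅).eval 1 = (ncSum W' f' U ∅).eval 1) (U : Finset (Fin n)) :
    ∀ S, Disjoint U S → ncSum W f U S = ncSum W' f' U S := by
  induction U using Finset.strongInduction with
  | H U ih =>
  rcases U.eq_empty_or_nonempty with rfl | hU
  · intro S _
    rw [hW.ncSum_empty, hW'.ncSum_empty]
  have key : ∀ S, Disjoint U S → derivative (ncSum W f U S - ncSum W' f' U S) =
      C ((ncSum W f U S).coeff 1 - (ncSum W' f' U S).coeff 1) := by
    intro S hS
    rw [derivative_sub, hW.derivative_ncSum, hW'.derivative_ncSum, ← Finset.sum_sub_distrib,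
      Finset.sum_eq_single U]
    · simp [hW.ncSum_empty, hW'.ncSum_empty]
    · intro T hT hTU
      have hTU : T ⊂ U := lt_of_le_of_ne (mem_powerset.1 hT) hTU
      rcases T.eq_empty_or_nonempty with rfl | hT'
      · simp [hW.ncSum_empty, hW'.ncSum_empty, coeff_one]
      · rw [ih T hTU S (hS.mono_left hTU.1), ih (U \ T) ?_ (S ∪ T), sub_self]
        · refine Finset.disjoint_union_right.2 ⟨hS.mono_left sdiff_subset, ?_⟩
          exact Finset.sdiff_disjoint
        · exact Finset.sdiff_ssubset hTU.1 hT'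
    · simp
  have hc : (ncSum W f U ∅).coeff 1 = (ncSum W' f' U ∅).coeff 1 := by
    set c := (ncSum W f U ∅).coeff 1 - (ncSum W' f' U ∅).coeff 1 with hc
    have hd : derivative (ncSum W f U ∅ - ncSum W' f' U ∅ - C c * X) = 0 := by
      rw [derivative_sub, key ∅ (Finset.disjoint_empty_right U)]
      simp [hc]
    have h0 := eq_C_of_derivative_eq_zero hd
    have := congrArg (eval 1) h0
    simp only [eval_sub, eval_mul, eval_C, eval_X, h1 U hU, coeff_sub,
      hW.coeff_zero_ncSum hU, hW'.coeff_zero_ncSum hU, coeff_C_mul, coeff_X_zero] at this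
    apply sub_eq_zero.1
    rw [← hc]
    simpa using this
  intro S hS
  have hc' : (ncSum W f U S).coeff 1 = (ncSum W' f' U S).coeff 1 := by
    by_cases h : Unsplit S U
    · unfold ncSum at hc ⊢
      rwa [ncFamilies_eq_of_unsplit h]
    · rw [hW.coeff_one_ncSum_of_not_unsplit hS h, hW'.coeff_one_ncSum_of_not_unsplit hS h]
  have h0 := eq_C_of_derivative_eq_zero ((key S hS).trans (by rw [hc', sub_self, C_0]))
  rw [coeff_sub, hW.coeff_zero_ncSum hU, hW'.coeff_zero_ncSum hU, sub_self, C_0] at h0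
  exact sub_eq_zero.1 h0

end IsTreeWeight

end TreeWeights

section ForestWeight

open Finset Polynomial

variable {n : ℕ}

lemma NestedIn.refl (V : Finset (Fin n)) : NestedIn V V :=
  fun w hw => ⟨⟨w, hw, le_rfl⟩, ⟨w, hw, le_rfl⟩⟩

lemma NestedIn.trans {U V B : Finset (Fin n)} (h : NestedIn U V) (h' : NestedIn V B) :
    NestedIn U B := by
  intro u hu
  obtain ⟨⟨x, hx, hxu⟩, ⟨y, hy, huy⟩⟩ := h u hu
  obtain ⟨⟨x', hx', hxx'⟩, -⟩ := h' x hx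
  obtain ⟨-, ⟨y', hy', hyy'⟩⟩ := h' y hy
  exact ⟨⟨x', hx', hxx'.trans hxu⟩, ⟨y', hy', huy.trans hyy'⟩⟩

/-- Disjoint nonempty blocks nested in each other coincide. -/
lemma IsNCFamily.nestedIn_antisymm {U S : Finset (Fin n)} {P : Finset (Finset (Fin n))}
    (hP : IsNCFamily U S P) {V B : Finset (Fin n)} (hV : V ∈ P) (hB : B ∈ P)
    (h : NestedIn V B) (h' : NestedIn B V) : V = B := by
  have hVn := hP.nonempty V hV
  have hBn := hP.nonempty B hB
  obtain ⟨⟨x, hx, hxv⟩, -⟩ := h _ (V.min'_mem hVn)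
  obtain ⟨⟨y, hy, hyw⟩, -⟩ := h' _ (B.min'_mem hBn)
  have : V.min' hVn = B.min' hBn :=
    le_antisymm ((V.min'_le y hy).trans hyw) ((B.min'_le x hx).trans hxv)
  exact hP.eq_of_mem V hV B hB _ (V.min'_mem hVn) (this ▸ B.min'_mem hBn)

/-- Two blocks of a noncrossing family in which a common block is nested are comparable. -/
lemma IsNCFamily.nestedIn_total {U S : Finset (Fin n)} {P : Finset (Finset (Fin n))}
    (hP : IsNCFamily U S P) {V B E : Finset (Fin n)} (hV : V ∈ P) (hB : B ∈ P) (hE : E ∈ P)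
    (h : NestedIn E V) (h' : NestedIn E B) : NestedIn V B ∨ NestedIn B V := by
  by_cases hVB : V = B
  · exact Or.inl (hVB ▸ NestedIn.refl V)
  have hne : ∀ x ∈ V, ∀ y ∈ B, x ≠ y := by
    rintro x hx y hy rfl
    exact hVB (hP.eq_of_mem V hV B hB x hx hy)
  obtain ⟨w, hw⟩ := hP.nonempty E hE
  obtain ⟨⟨x, hx, hxw⟩, ⟨y, hy, hwy⟩⟩ := h w hw
  obtain ⟨⟨x', hx', hxw'⟩, ⟨y', hy', hwy'⟩⟩ := h' w hw
  have h1 : x' < y := lt_of_le_of_ne (hxw'.trans hwy) (hne y hy x' hx').symm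
  have h2 : x < y' := lt_of_le_of_ne (hxw.trans hwy') (hne x hx y' hy')
  rcases lt_or_gt_of_ne (hne x hx x' hx') with h3 | h3
  · exact Or.inr (hP.nestedIn_of_between hB hV hx hy hx' h3 h1)
  · exact Or.inl (hP.nestedIn_of_between hV hB hx' hy' hx h3 h2)

open Classical in
/-- The number of blocks of `P` nested in `V`. -/
noncomputable def nestCard (P : Finset (Finset (Fin n))) (V : Finset (Fin n)) : ℕ :=
  (P.filter fun B => NestedIn B V).card

/-- The forest factorial of a family of blocks. -/
noncomputable def nestFactorial (P : Finset (Finset (Fin n))) : ℕ :=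
  ∏ V ∈ P, nestCard P V

lemma nestCard_pos {P : Finset (Finset (Fin n))} {V : Finset (Fin n)} (hV : V ∈ P) :
    0 < nestCard P V := by
  classical
  exact Finset.card_pos.2 ⟨V, mem_filter.2 ⟨hV, NestedIn.refl V⟩⟩

lemma nestFactorial_singleton (V : Finset (Fin n)) : nestFactorial {V} = 1 := by
  classical
  simp [nestFactorial, nestCard, Finset.filter_singleton, NestedIn.refl]

open Classical in
/-- The outermost blocks of `P`. -/
noncomputable def outermost (P : Finset (Finset (Fin n))) : Finset (Finset (Fin n)) :=
  P.filter fun V => ∀ B ∈ P, NestedIn V B → B = V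

lemma mem_outermost {P : Finset (Finset (Fin n))} {V : Finset (Fin n)} :
    V ∈ outermost P ↔ V ∈ P ∧ ∀ B ∈ P, NestedIn V B → B = V := by
  simp [outermost]

lemma singleton_mem_outerClosed {P : Finset (Finset (Fin n))} {V : Finset (Fin n)} :
    {V} ∈ outerClosed P ↔ V ∈ outermost P := by
  simp [mem_outerClosed, mem_outermost, OuterClosed]

lemma nestFactorial_eq_mul {P : Finset (Finset (Fin n))} {V : Finset (Fin n)}
    (hV : V ∈ outermost P) : nestFactorial P = nestCard P V * nestFactorial (P \ {V}) := by
  classical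
  obtain ⟨hVP, hV⟩ := mem_outermost.1 hV
  rw [nestFactorial, nestFactorial, Finset.sdiff_singleton_eq_erase, ← Finset.mul_prod_erase _ _ hVP]
  congr 1
  refine Finset.prod_congr rfl fun B hB => ?_
  obtain ⟨hBV, hBP⟩ := mem_erase.1 hB
  rw [nestCard, nestCard, Finset.filter_erase, Finset.erase_eq_of_notMem]
  exact fun h => hBV (hV B hBP (mem_filter.1 h).2)

lemma IsNCFamily.exists_outermost {U S : Finset (Fin n)} {P : Finset (Finset (Fin n))}
    (hP : IsNCFamily U S P) {B : Finset (Fin n)} (hB : B ∈ P) :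
    ∃ V ∈ outermost P, NestedIn B V := by
  classical
  obtain ⟨V, hV, hmax⟩ := (P.filter fun V => NestedIn B V).exists_max_image (nestCard P)
    ⟨B, mem_filter.2 ⟨hB, NestedIn.refl B⟩⟩
  obtain ⟨hVP, hBV⟩ := mem_filter.1 hV
  refine ⟨V, mem_outermost.2 ⟨hVP, fun E hE hVE => ?_⟩, hBV⟩
  by_contra hne
  refine absurd (hmax E (mem_filter.2 ⟨hE, hBV.trans hVE⟩)) (not_le.2 ?_)
  refine Finset.card_lt_card (Finset.ssubset_iff_subset_ne.2 ⟨?_, fun h => ?_⟩)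
  · exact fun F hF => mem_filter.2 ⟨(mem_filter.1 hF).1, (mem_filter.1 hF).2.trans hVE⟩
  · have : E ∈ P.filter fun B => NestedIn B V := h ▸ mem_filter.2 ⟨hE, NestedIn.refl E⟩
    exact hne (hP.nestedIn_antisymm hE hVP (mem_filter.1 this).2 hVE)

lemma IsNCFamily.sum_nestCard {U S : Finset (Fin n)} {P : Finset (Finset (Fin n))}
    (hP : IsNCFamily U S P) : ∑ V ∈ outermost P, nestCard P V = P.card := by
  classical
  have h := Finset.sum_card_bipartiteAbove_eq_sum_card_bipartiteBelow
    (s := outermost P) (t := P) fun V B => NestedIn B V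
  refine h.trans ?_
  rw [Finset.card_eq_sum_ones]
  refine Finset.sum_congr rfl fun B hB => ?_
  obtain ⟨V, hV, hBV⟩ := hP.exists_outermost hB
  refine Finset.card_eq_one.2 ⟨V, Finset.eq_singleton_iff_unique_mem.2
    ⟨(Finset.mem_bipartiteBelow _).2 ⟨hV, hBV⟩, fun E hE => ?_⟩⟩
  obtain ⟨hE, hBE⟩ := (Finset.mem_bipartiteBelow _).1 hE
  obtain ⟨hVP, hV⟩ := mem_outermost.1 hV
  obtain ⟨hEP, hE⟩ := mem_outermost.1 hE
  rcases hP.nestedIn_total hVP hEP hB hBV hBE with h | h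
  · exact hV E hEP h
  · exact (hE V hVP h).symm

/-- The weight `X ^ |P| / t(P)!`. -/
noncomputable def forestWeight (P : Finset (Finset (Fin n))) : ℂ[X] :=
  C ((nestFactorial P : ℂ)⁻¹) * X ^ P.card

lemma coeff_one_forestWeight (P : Finset (Finset (Fin n))) :
    (forestWeight P).coeff 1 = if P.card = 1 then 1 else 0 := by
  rw [forestWeight, coeff_C_mul, coeff_X_pow]
  split_ifs with h1 h2 h2
  · obtain ⟨V, rfl⟩ := Finset.card_eq_one.1 h2
    simp [nestFactorial_singleton]
  · exact absurd h1.symm h2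
  · exact absurd h2.symm h1
  · simp

lemma isTreeWeight_forestWeight : IsTreeWeight (forestWeight (n := n)) where
  empty := by simp [forestWeight, nestFactorial]
  coeff_zero P hP := by
    rw [forestWeight, coeff_C_mul, coeff_X_pow, if_neg, mul_zero]
    exact (Finset.card_pos.2 hP).ne
  coeff_one_union P Q hP hQ hPQ _ := by
    rw [coeff_one_forestWeight, if_neg]
    rw [Finset.card_union_of_disjoint hPQ]
    have := Finset.card_pos.2 hP
    have := Finset.card_pos.2 hQ
    omega
  derivative_eq U S P hP := by
    have hsub : (outermost P).image (fun V => ({V} : Finset (Finset (Fin n)))) ⊆ outerClosed P := by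
      intro D hD
      obtain ⟨V, hV, rfl⟩ := mem_image.1 hD
      exact singleton_mem_outerClosed.2 hV
    rw [← Finset.sum_subset hsub, Finset.sum_image (fun _ _ _ _ h => by simpa using h)]
    · have hterm : ∀ V ∈ outermost P,
          C ((forestWeight {V}).coeff 1) * forestWeight (P \ {V}) =
            C ((nestCard P V : ℂ) * (nestFactorial P : ℂ)⁻¹) * X ^ (P.card - 1) := by
        intro V hV
        have hVP := (mem_outermost.1 hV).1
        have h0 : (nestCard P V : ℂ) ≠ 0 := by exact_mod_cast (nestCard_pos hVP).ne'
        rw [coeff_one_forestWeight, if_pos (Finset.card_singleton V), C_1, one_mul, forestWeight,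
          Finset.card_sdiff_of_subset (Finset.singleton_subset_iff.2 hVP), Finset.card_singleton,
          nestFactorial_eq_mul hV, Nat.cast_mul, mul_inv, mul_inv_cancel_left₀ h0]
      rw [Finset.sum_congr rfl hterm, ← Finset.sum_mul, ← map_sum, ← Finset.sum_mul, ← Nat.cast_sum,
        hP.sum_nestCard, forestWeight, derivative_C_mul, derivative_X_pow, C_mul]
      ring
    · intro D hD hD'
      rw [coeff_one_forestWeight, if_neg, C_0, zero_mul]
      intro h1
      obtain ⟨V, rfl⟩ := Finset.card_eq_one.1 h1
      exact hD' (mem_image_of_mem _ (singleton_mem_outerClosed.1 hD))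

end ForestWeight

section OrderWeight

open Finset Polynomial

variable {n : ℕ}

/-- `c` is strictly increasing on `P` along nesting, outer blocks having smaller values. -/
def StrictOn (P : Finset (Finset (Fin n))) (c : Finset (Fin n) → ℕ) : Prop :=
  ∀ V ∈ P, ∀ B ∈ P, NestedIn B V → V ≠ B → c V < c B

open Classical in
/-- The strictly order-preserving maps `P → {0, …, x - 1}`, extended by zero outside `P`. -/
noncomputable def strictMaps (P : Finset (Finset (Fin n))) (x : ℕ) :
    Finset (Finset (Fin n) → ℕ) :=
  (Fintype.piFinset fun V => if V ∈ P then range x else {0}).filter (StrictOn P)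

lemma mem_strictMaps {P : Finset (Finset (Fin n))} {x : ℕ} {c : Finset (Fin n) → ℕ} :
    c ∈ strictMaps P x ↔ (∀ V ∈ P, c V < x) ∧ (∀ V ∉ P, c V = 0) ∧ StrictOn P c := by
  simp only [strictMaps, mem_filter, Fintype.mem_piFinset, ← and_assoc]
  refine and_congr_left fun _ => ⟨fun h => ⟨fun V hV => ?_, fun V hV => ?_⟩, fun h V => ?_⟩
  · simpa [hV] using h V
  · simpa [hV] using h V
  · by_cases hV : V ∈ P
    · simpa [hV] using h.1 V hV
    · simpa [hV] using h.2 V hV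

/-- The restriction of `c` to `P`, extended by zero. -/
def extendZero (P : Finset (Finset (Fin n))) (c : Finset (Fin n) → ℕ) (V : Finset (Fin n)) : ℕ :=
  if V ∈ P then c V else 0

lemma extendZero_of_mem {P : Finset (Finset (Fin n))} {V : Finset (Fin n)} (hV : V ∈ P)
    (c : Finset (Fin n) → ℕ) : extendZero P c V = c V :=
  if_pos hV

lemma extendZero_of_notMem {P : Finset (Finset (Fin n))} {V : Finset (Fin n)} (hV : V ∉ P)
    (c : Finset (Fin n) → ℕ) : extendZero P c V = 0 :=
  if_neg hV

lemma extendZero_mem_strictMaps {P : Finset (Finset (Fin n))} {x : ℕ} {c : Finset (Fin n) → ℕ}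
    (h1 : ∀ V ∈ P, c V < x) (h2 : StrictOn P c) : extendZero P c ∈ strictMaps P x := by
  refine mem_strictMaps.2 ⟨fun V hV => ?_, fun V hV => extendZero_of_notMem hV c, ?_⟩
  · rw [extendZero_of_mem hV]
    exact h1 V hV
  · intro V hV B hB h hne
    rw [extendZero_of_mem hV, extendZero_of_mem hB]
    exact h2 V hV B hB h hne

lemma extendZero_eq {P : Finset (Finset (Fin n))} {x : ℕ} {c d : Finset (Fin n) → ℕ}
    (hc : c ∈ strictMaps P x) (hd : ∀ V ∈ P, d V = c V) : extendZero P d = c := by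
  funext V
  by_cases hV : V ∈ P
  · rw [extendZero_of_mem hV, hd V hV]
  · rw [extendZero_of_notMem hV, (mem_strictMaps.1 hc).2.1 V hV]

lemma card_strictMaps_union {P Q : Finset (Finset (Fin n))} (hPQ : Disjoint P Q)
    (h : ∀ V ∈ P, ∀ B ∈ Q, ¬ NestedIn V B ∧ ¬ NestedIn B V) (x : ℕ) :
    (strictMaps (P ∪ Q) x).card = (strictMaps P x).card * (strictMaps Q x).card := by
  rw [← Finset.card_product]
  refine Finset.card_bij' (fun c _ => (extendZero P c, extendZero Q c))
    (fun c _ => fun V => if V ∈ P then c.1 V else extendZero Q c.2 V) ?_ ?_ ?_ ?_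
  · intro c hc
    obtain ⟨h1, -, h3⟩ := mem_strictMaps.1 hc
    refine mem_product.2 ⟨?_, ?_⟩
    · exact extendZero_mem_strictMaps (fun V hV => h1 V (mem_union_left _ hV))
        fun V hV B hB => h3 V (mem_union_left _ hV) B (mem_union_left _ hB)
    · exact extendZero_mem_strictMaps (fun V hV => h1 V (mem_union_right _ hV))
        fun V hV B hB => h3 V (mem_union_right _ hV) B (mem_union_right _ hB)
  · rintro ⟨c, d⟩ hcd
    obtain ⟨hc, hd⟩ := mem_product.1 hcd
    obtain ⟨hc1, -, hc3⟩ := mem_strictMaps.1 hc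
    obtain ⟨hd1, -, hd3⟩ := mem_strictMaps.1 hd
    have hQ : ∀ V ∈ Q, V ∉ P := fun V hV hV' => Finset.disjoint_left.1 hPQ hV' hV
    refine mem_strictMaps.2 ⟨fun V hV => ?_, fun V hV => ?_, fun V hV B hB hBV hne => ?_⟩
    · rcases mem_union.1 hV with hV | hV
      · simpa [hV] using hc1 V hV
      · simpa [hQ V hV, extendZero_of_mem hV] using hd1 V hV
    · rw [mem_union, not_or] at hV
      simp [hV.1, extendZero_of_notMem hV.2]
    · rcases mem_union.1 hV with hV | hV <;> rcases mem_union.1 hB with hB | hB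
      · simpa [hV, hB] using hc3 V hV B hB hBV hne
      · exact absurd hBV (h V hV B hB).2
      · exact absurd hBV (h B hB V hV).1
      · simpa [hQ V hV, hQ B hB, extendZero_of_mem hV, extendZero_of_mem hB]
          using hd3 V hV B hB hBV hne
  · intro c hc
    funext V
    by_cases hV : V ∈ P
    · simp [hV, extendZero_of_mem hV]
    · by_cases hV' : V ∈ Q
      · simp [hV, extendZero_of_mem hV']
      · simp [hV, extendZero_of_notMem hV', (mem_strictMaps.1 hc).2.1 V (by simp [hV, hV'])]
  · rintro ⟨c, d⟩ hcd
    obtain ⟨hc, hd⟩ := mem_product.1 hcd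
    refine Prod.ext (extendZero_eq hc fun V hV => by simp [hV]) (extendZero_eq hd fun V hV => ?_)
    simp [Finset.disjoint_right.1 hPQ hV, extendZero_of_mem hV]

lemma card_strictMaps_add (P : Finset (Finset (Fin n))) (x y : ℕ) :
    (strictMaps P (x + y)).card =
      ∑ D ∈ outerClosed P, (strictMaps D x).card * (strictMaps (P \ D) y).card := by
  simp_rw [← Finset.card_product]
  rw [← Finset.card_sigma]
  refine Finset.card_bij'
    (fun c _ => ⟨P.filter (fun V => c V < x), (extendZero (P.filter fun V => c V < x) c,
      extendZero (P \ P.filter fun V => c V < x) fun V => c V - x)⟩)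
    (fun d _ => fun V => if V ∈ d.1 then d.2.1 V else
      extendZero P (fun V => d.2.2 V + x) V) ?_ ?_ ?_ ?_
  · intro c hc
    obtain ⟨h1, -, h3⟩ := mem_strictMaps.1 hc
    refine mem_sigma.2 ⟨mem_outerClosed.2 ⟨filter_subset _ _, ?_⟩, mem_product.2 ⟨?_, ?_⟩⟩
    · intro V hV B hB hVB
      obtain ⟨hV, hVx⟩ := mem_filter.1 hV
      by_cases hne : B = V
      · exact mem_filter.2 ⟨hB, hne ▸ hVx⟩
      · exact mem_filter.2 ⟨hB, (h3 B hB V hV hVB hne).trans hVx⟩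
    · exact extendZero_mem_strictMaps (fun V hV => (mem_filter.1 hV).2)
        fun V hV B hB => h3 V (mem_filter.1 hV).1 B (mem_filter.1 hB).1
    · have hmem : ∀ V ∈ P \ P.filter (fun V => c V < x), V ∈ P ∧ x ≤ c V := by
        intro V hV
        obtain ⟨hV, hVx⟩ := mem_sdiff.1 hV
        exact ⟨hV, not_lt.1 fun h => hVx (mem_filter.2 ⟨hV, h⟩)⟩
      refine extendZero_mem_strictMaps (fun V hV => ?_) fun V hV B hB hBV hne => ?_
      · have := h1 V (hmem V hV).1
        have := (hmem V hV).2
        omega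
      · have := h3 V (hmem V hV).1 B (hmem B hB).1 hBV hne
        have := (hmem V hV).2
        omega
  · rintro ⟨D, c, d⟩ hcd
    obtain ⟨hD, hcd⟩ := mem_sigma.1 hcd
    obtain ⟨hD, hD'⟩ : D ⊆ P ∧ OuterClosed P D := mem_outerClosed.1 hD
    obtain ⟨hc, hd⟩ : c ∈ strictMaps D x ∧ d ∈ strictMaps (P \ D) y := mem_product.1 hcd
    obtain ⟨hc1, -, hc3⟩ := mem_strictMaps.1 hc
    obtain ⟨hd1, -, hd3⟩ := mem_strictMaps.1 hd
    refine mem_strictMaps.2 ⟨fun V hV => ?_, fun V hV => ?_, fun V hV B hB hBV hne => ?_⟩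
    · by_cases hVD : V ∈ D
      · have := hc1 V hVD
        simp only [hVD, if_true]
        omega
      · have := hd1 V (mem_sdiff.2 ⟨hV, hVD⟩)
        simp only [hVD, if_false, extendZero_of_mem hV]
        omega
    · have hVD : V ∉ D := fun h => hV (hD h)
      simp [hVD, extendZero_of_notMem hV]
    · by_cases hVD : V ∈ D <;> by_cases hBD : B ∈ D
      · simpa [hVD, hBD] using hc3 V hVD B hBD hBV hne
      · have := hc1 V hVD
        simp only [hVD, hBD, if_true, if_false, extendZero_of_mem hB]
        omega
      · exact absurd (hD' B hBD V hV hBV) hVD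
      · have := hd3 V (mem_sdiff.2 ⟨hV, hVD⟩) B (mem_sdiff.2 ⟨hB, hBD⟩) hBV hne
        simpa [hVD, hBD, extendZero_of_mem hV, extendZero_of_mem hB] using this
  · intro c hc
    funext V
    by_cases hV : V ∈ P
    · by_cases hx : c V < x
      · simp [hV, hx, extendZero]
      · simp [hV, hx, extendZero, Nat.sub_add_cancel (not_lt.1 hx)]
    · simp [hV, extendZero, (mem_strictMaps.1 hc).2.1 V hV]
  · rintro ⟨D, c, d⟩ hcd
    obtain ⟨hD, hcd⟩ := mem_sigma.1 hcd
    obtain ⟨hD, -⟩ := mem_outerClosed.1 hD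
    obtain ⟨hc, hd⟩ : c ∈ strictMaps D x ∧ d ∈ strictMaps (P \ D) y := mem_product.1 hcd
    have hDeq : P.filter (fun V => (if V ∈ D then c V else extendZero P (fun V => d V + x) V) < x)
        = D := by
      ext V
      rw [mem_filter]
      constructor
      · rintro ⟨hV, hVx⟩
        by_contra hVD
        simp [hVD, extendZero_of_mem hV] at hVx
      · exact fun hV => ⟨hD hV, by simpa [hV] using (mem_strictMaps.1 hc).1 V hV⟩
    dsimp only
    rw [hDeq, extendZero_eq hc fun V hV => by simp [hV], extendZero_eq hd fun V hV => ?_]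
    obtain ⟨hV, hVD⟩ := mem_sdiff.1 hV
    simp [hVD, extendZero_of_mem hV]

/-- The number of surjective strictly order-preserving maps from `P` onto a chain of size `k`. -/
noncomputable def surjCount (P : Finset (Finset (Fin n))) (k : ℕ) : ℕ :=
  Nat.card {f : {V // V ∈ P} → Fin k // Function.Surjective f ∧
    ∀ V B : {V // V ∈ P}, NestedIn B.1 V.1 → V ≠ B → f V < f B}

lemma surjCount_eq_zero {P : Finset (Finset (Fin n))} {k : ℕ} (hk : P.card < k) :
    surjCount P k = 0 := by
  have : IsEmpty {f : {V // V ∈ P} → Fin k // Function.Surjective f ∧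
      ∀ V B : {V // V ∈ P}, NestedIn B.1 V.1 → V ≠ B → f V < f B} := by
    refine ⟨fun f => ?_⟩
    have := Fintype.card_le_of_surjective f.1 f.2.1
    simp at this
    omega
  exact Nat.card_of_isEmpty

lemma card_strictMaps_image_eq (P : Finset (Finset (Fin n))) {x : ℕ} {R : Finset ℕ}
    (hR : R ⊆ range x) :
    ((strictMaps P x).filter fun c => P.image c = R).card = surjCount P R.card := by
  classical
  rw [surjCount, Nat.card_eq_fintype_card, ← Finset.card_univ]
  symm
  refine Finset.card_bij
    (fun f _ => fun V => if hV : V ∈ P then R.orderEmbOfFin rfl (f.1 ⟨V, hV⟩) else 0) ?_ ?_ ?_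
  · rintro ⟨f, hf, hf'⟩ -
    refine mem_filter.2 ⟨mem_strictMaps.2 ⟨fun V hV => ?_, fun V hV => ?_, ?_⟩, ?_⟩
    · simpa [hV] using hR (R.orderEmbOfFin_mem rfl (f ⟨V, hV⟩))
    · simp [hV]
    · intro V hV B hB hBV hne
      simpa [hV, hB] using hf' ⟨V, hV⟩ ⟨B, hB⟩ hBV (by simpa using hne)
    · ext r
      rw [mem_image]
      constructor
      · rintro ⟨V, hV, rfl⟩
        simp [hV]
      · intro hr
        have : r ∈ Set.range (R.orderEmbOfFin rfl) := by
          rw [Finset.range_orderEmbOfFin]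
          exact hr
        obtain ⟨i, rfl⟩ := this
        obtain ⟨⟨V, hV⟩, rfl⟩ := hf i
        exact ⟨V, hV, by simp [hV]⟩
  · rintro ⟨f, hf⟩ - ⟨g, hg⟩ - hfg
    refine Subtype.ext (funext fun ⟨V, hV⟩ => ?_)
    simpa [hV] using congrFun hfg V
  · intro c hc
    obtain ⟨hc, hcR⟩ := mem_filter.1 hc
    obtain ⟨-, h2, h3⟩ := mem_strictMaps.1 hc
    have hmem : ∀ V : {V // V ∈ P}, c V ∈ R := fun V => hcR ▸ mem_image_of_mem c V.2
    refine ⟨⟨fun V => (R.orderIsoOfFin rfl).symm ⟨c V, hmem V⟩, ?_, ?_⟩, mem_univ _, ?_⟩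
    · intro i
      have hi := (R.orderIsoOfFin rfl i).2
      simp only [← hcR, mem_image] at hi
      obtain ⟨V, hV, hVi⟩ := hi
      refine ⟨⟨V, hV⟩, ?_⟩
      rw [OrderIso.symm_apply_eq]
      exact Subtype.ext (by simpa [hcR] using hVi)
    · intro V B hBV hne
      rw [OrderIso.lt_iff_lt]
      exact h3 V V.2 B B.2 hBV fun h => hne (Subtype.ext h)
    · funext V
      by_cases hV : V ∈ P
      · simp [hV, ← Finset.coe_orderIsoOfFin_apply]
      · simp [hV, h2 V hV]

lemma card_strictMaps (P : Finset (Finset (Fin n))) (x : ℕ) :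
    (strictMaps P x).card = ∑ k ∈ range (P.card + 1), surjCount P k * x.choose k := by
  classical
  have hmaps : ∀ c ∈ strictMaps P x, P.image c ∈ (range x).powerset := by
    intro c hc
    refine mem_powerset.2 fun r hr => ?_
    obtain ⟨V, hV, rfl⟩ := mem_image.1 hr
    exact mem_range.2 ((mem_strictMaps.1 hc).1 V hV)
  rw [Finset.card_eq_sum_card_fiberwise hmaps,
    Finset.sum_congr rfl fun R hR => card_strictMaps_image_eq P (mem_powerset.1 hR),
    Finset.sum_powerset_apply_card, card_range]
  simp only [smul_eq_mul]
  have h1 : ∀ N, x ≤ N → ∑ k ∈ range (x + 1), x.choose k * surjCount P k =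
      ∑ k ∈ range (N + 1), x.choose k * surjCount P k := by
    intro N hN
    refine Finset.sum_subset (range_subset_range.2 (by omega)) fun k _ hk => ?_
    rw [Nat.choose_eq_zero_of_lt (by simpa using hk), zero_mul]
  have h2 : ∀ N, P.card ≤ N → ∑ k ∈ range (P.card + 1), surjCount P k * x.choose k =
      ∑ k ∈ range (N + 1), surjCount P k * x.choose k := by
    intro N hN
    refine Finset.sum_subset (range_subset_range.2 (by omega)) fun k _ hk => ?_
    rw [surjCount_eq_zero (by simpa using hk), zero_mul]
  rw [h1 _ (le_max_left x P.card), h2 _ (le_max_right x P.card)]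
  exact Finset.sum_congr rfl fun k _ => mul_comm _ _

/-- The strict order polynomial of the nesting poset of `P`. -/
noncomputable def orderWeight (P : Finset (Finset (Fin n))) : ℂ[X] :=
  ∑ k ∈ range (P.card + 1), C ((surjCount P k : ℂ) / (k.factorial : ℂ)) * descPochhammer ℂ k

lemma eval_orderWeight (P : Finset (Finset (Fin n))) (x : ℕ) :
    (orderWeight P).eval (x : ℂ) = ((strictMaps P x).card : ℂ) := by
  rw [orderWeight, eval_finsetSum, card_strictMaps, Nat.cast_sum]
  refine Finset.sum_congr rfl fun k _ => ?_
  have hk : (k.factorial : ℂ) ≠ 0 := by exact_mod_cast k.factorial_ne_zero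
  rw [eval_mul, eval_C, descPochhammer_eval_eq_descFactorial, Nat.descFactorial_eq_factorial_mul_choose]
  push_cast
  field_simp

lemma Polynomial.eq_of_eval_natCast {p q : ℂ[X]} (h : ∀ x : ℕ, p.eval (x : ℂ) = q.eval (x : ℂ)) :
    p = q :=
  eq_of_infinite_eval_eq p q <| (Set.infinite_range_of_injective Nat.cast_injective).mono <| by
    rintro _ ⟨x, rfl⟩
    exact h x

lemma coeff_one_descPochhammer_succ (k : ℕ) :
    (descPochhammer ℂ (k + 1)).coeff 1 = (-1) ^ k * (k.factorial : ℂ) := by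
  have h : ∀ k : ℕ, (descPochhammer ℂ k).eval (-1) = (-1) ^ k * (k.factorial : ℂ) := by
    intro k
    induction k with
    | zero => simp
    | succ k ih =>
      rw [descPochhammer_succ_eval, ih, Nat.factorial_succ]
      push_cast
      ring
  rw [descPochhammer_succ_left, coeff_X_mul, coeff_zero_eq_eval_zero, eval_comp]
  simpa using h k

lemma coeff_one_orderWeight (P : Finset (Finset (Fin n))) :
    (orderWeight P).coeff 1 =
      ∑ k ∈ Icc 1 P.card, ((-1 : ℂ) ^ (k + 1) / (k : ℂ)) * (surjCount P k : ℂ) := by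
  rw [orderWeight, finsetSum_coeff, Finset.sum_range_succ', ← Finset.sum_image (g := fun k => k + 1)
    (f := fun k => (C ((surjCount P k : ℂ) / (k.factorial : ℂ)) * descPochhammer ℂ k).coeff 1)
    (fun _ _ _ _ h => by simpa using h)]
  have hI : (range P.card).image (fun k => k + 1) = Icc 1 P.card := by
    ext k
    simp only [mem_image, mem_range, mem_Icc]
    constructor
    · rintro ⟨j, hj, rfl⟩
      omega
    · rintro ⟨h1, h2⟩
      exact ⟨k - 1, by omega, by omega⟩
  rw [hI]
  simp only [descPochhammer_zero, mul_one, coeff_C_succ, add_zero, coeff_C_mul]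
  refine Finset.sum_congr rfl fun k hk => ?_
  obtain ⟨k, rfl⟩ := Nat.exists_eq_succ_of_ne_zero (Nat.one_le_iff_ne_zero.1 (mem_Icc.1 hk).1)
  have hf : (k.factorial : ℂ) ≠ 0 := by exact_mod_cast k.factorial_ne_zero
  have hk0 : ((k : ℂ) + 1) ≠ 0 := by exact_mod_cast k.succ_ne_zero
  rw [Nat.succ_eq_add_one, coeff_one_descPochhammer_succ, Nat.factorial_succ]
  push_cast
  field_simp
  ring

lemma orderWeight_union {P Q : Finset (Finset (Fin n))} (hPQ : Disjoint P Q)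
    (h : ∀ V ∈ P, ∀ B ∈ Q, ¬ NestedIn V B ∧ ¬ NestedIn B V) :
    orderWeight (P ∪ Q) = orderWeight P * orderWeight Q := by
  refine Polynomial.eq_of_eval_natCast fun x => ?_
  rw [eval_mul, eval_orderWeight, eval_orderWeight, eval_orderWeight,
    card_strictMaps_union hPQ h, Nat.cast_mul]

lemma coeff_zero_orderWeight {P : Finset (Finset (Fin n))} (hP : P.Nonempty) :
    (orderWeight P).coeff 0 = 0 := by
  obtain ⟨V, hV⟩ := hP
  have h0 := eval_orderWeight P 0
  rw [Nat.cast_zero] at h0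
  rw [coeff_zero_eq_eval_zero, h0, Nat.cast_eq_zero, Finset.card_eq_zero]
  exact Finset.eq_empty_of_forall_notMem fun c hc =>
    Nat.not_lt_zero _ ((mem_strictMaps.1 hc).1 V hV)

lemma taylor_orderWeight (P : Finset (Finset (Fin n))) (x : ℕ) :
    taylor (x : ℂ) (orderWeight P) =
      ∑ D ∈ outerClosed P, C ((orderWeight (P \ D)).eval (x : ℂ)) * orderWeight D := by
  refine Polynomial.eq_of_eval_natCast fun y => ?_
  rw [taylor_eval, eval_finsetSum, ← Nat.cast_add, eval_orderWeight, card_strictMaps_add,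
    Nat.cast_sum]
  refine Finset.sum_congr rfl fun D _ => ?_
  rw [eval_mul, eval_C, eval_orderWeight, eval_orderWeight, Nat.cast_mul, mul_comm]

lemma isTreeWeight_orderWeight : IsTreeWeight (orderWeight (n := n)) where
  empty := by
    refine Polynomial.eq_of_eval_natCast fun x => ?_
    rw [eval_orderWeight, eval_one, Nat.cast_eq_one, Finset.card_eq_one]
    refine ⟨0, Finset.eq_singleton_iff_unique_mem.2 ⟨mem_strictMaps.2 (by simp [StrictOn]), ?_⟩⟩
    exact fun c hc => funext fun V => (mem_strictMaps.1 hc).2.1 V (by simp)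
  coeff_zero _ := coeff_zero_orderWeight
  coeff_one_union P Q hP hQ hPQ h := by
    rw [orderWeight_union hPQ h, mul_coeff_one, coeff_zero_orderWeight hP,
      coeff_zero_orderWeight hQ, zero_mul, mul_zero, add_zero]
  derivative_eq U S P _ := by
    refine Polynomial.eq_of_eval_natCast fun x => ?_
    rw [← taylor_coeff_one, taylor_orderWeight, finsetSum_coeff, eval_finsetSum]
    refine Finset.sum_congr rfl fun D _ => ?_
    rw [coeff_C_mul, eval_mul, eval_C, mul_comm]

end OrderWeight

section Transfer

open Finset Polynomial

variable {m n : ℕ}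

lemma isNCFamily_parts {π : NPart m} (hπ : IsNoncrossing π) : IsNCFamily univ ∅ π.parts where
  nonempty _ hB := π.nonempty_of_mem_parts hB
  eq_of_mem _ hB _ hC _ := π.eq_of_mem_parts hB hC
  mem_iff x := by simpa using π.exists_mem (mem_univ x)
  noncrossing := hπ
  unsplit B _ x _ y _ s hs := by simp at hs

/-- A noncrossing family of blocks covering `univ` is the block set of a partition. -/
lemma IsNCFamily.exists_parts_eq {P : Finset (Finset (Fin m))} (hP : IsNCFamily univ ∅ P) :
    ∃ π : NPart m, IsNoncrossing π ∧ π.parts = P := by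
  refine ⟨Finpartition.ofExistsUnique P (fun B _ => subset_univ B) (fun x _ => ?_) ?_,
    hP.noncrossing, rfl⟩
  · obtain ⟨B, hB, hx⟩ := (hP.mem_iff x).1 (mem_univ x)
    exact ⟨B, ⟨hB, hx⟩, fun C hC => hP.eq_of_mem C hC.1 B hB x hC.2 hx⟩
  · exact fun h => by simpa using hP.nonempty ∅ h

/-- The image of a family of blocks under an order embedding. -/
def mapBlocks (e : Fin m ↪o Fin n) (P : Finset (Finset (Fin m))) : Finset (Finset (Fin n)) :=
  P.map (mapEmbedding e.toEmbedding).toEmbedding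

lemma mem_mapBlocks {e : Fin m ↪o Fin n} {P : Finset (Finset (Fin m))} {B : Finset (Fin n)} :
    B ∈ mapBlocks e P ↔ ∃ V ∈ P, V.map e.toEmbedding = B := by
  simp [mapBlocks]

lemma mapBlocks_injective (e : Fin m ↪o Fin n) : Function.Injective (mapBlocks e) :=
  Finset.map_injective _

lemma isNCFamily_mapBlocks_iff {e : Fin m ↪o Fin n} {P : Finset (Finset (Fin m))} :
    IsNCFamily (univ.map e.toEmbedding) ∅ (mapBlocks e P) ↔ IsNCFamily univ ∅ P := by
  have hmem : ∀ {V : Finset (Fin m)} {x : Fin m}, e x ∈ V.map e.toEmbedding ↔ x ∈ V :=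
    fun {V x} => mem_map' e.toEmbedding
  have hmap : ∀ V ∈ P, V.map e.toEmbedding ∈ mapBlocks e P := fun V hV =>
    mem_mapBlocks.2 ⟨V, hV, rfl⟩
  constructor
  · intro h
    constructor
    · exact fun V hV => map_nonempty.1 (h.nonempty _ (hmap V hV))
    · intro V hV B hB x hx hx'
      exact map_injective e.toEmbedding
        (h.eq_of_mem _ (hmap V hV) _ (hmap B hB) (e x) (hmem.2 hx) (hmem.2 hx'))
    · intro x
      obtain ⟨B, hB, hx⟩ := (h.mem_iff (e x)).1 (hmem.2 (mem_univ x))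
      obtain ⟨V, hV, rfl⟩ := mem_mapBlocks.1 hB
      exact iff_of_true (mem_univ x) ⟨V, hV, hmem.1 hx⟩
    · intro a b c d hab hbc hcd V hV B hB ha hc hb hd
      exact map_injective e.toEmbedding (h.noncrossing (e a) (e b) (e c) (e d) (by simpa)
        (by simpa) (by simpa) _ (hmap V hV) _ (hmap B hB) (hmem.2 ha) (hmem.2 hc) (hmem.2 hb)
        (hmem.2 hd))
    · intro V _ x _ y _ s hs
      simp at hs
  · intro h
    constructor
    · intro B hB
      obtain ⟨V, hV, rfl⟩ := mem_mapBlocks.1 hB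
      exact map_nonempty.2 (h.nonempty V hV)
    · intro B hB C hC x hx hx'
      obtain ⟨V, hV, rfl⟩ := mem_mapBlocks.1 hB
      obtain ⟨W, hW, rfl⟩ := mem_mapBlocks.1 hC
      obtain ⟨x, -, rfl⟩ := mem_map.1 hx
      rw [h.eq_of_mem V hV W hW x (hmem.1 hx) (hmem.1 hx')]
    · intro x
      constructor
      · intro hx
        obtain ⟨x, -, rfl⟩ := mem_map.1 hx
        obtain ⟨V, hV, hx⟩ := (h.mem_iff x).1 (mem_univ x)
        exact ⟨_, hmap V hV, hmem.2 hx⟩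
      · rintro ⟨B, hB, hx⟩
        obtain ⟨V, hV, rfl⟩ := mem_mapBlocks.1 hB
        exact map_subset_map.2 (subset_univ V) hx
    · intro a b c d hab hbc hcd B hB C hC ha hc hb hd
      obtain ⟨V, hV, rfl⟩ := mem_mapBlocks.1 hB
      obtain ⟨W, hW, rfl⟩ := mem_mapBlocks.1 hC
      obtain ⟨a, -, rfl⟩ := mem_map.1 ha
      obtain ⟨b, -, rfl⟩ := mem_map.1 hb
      obtain ⟨c, -, rfl⟩ := mem_map.1 hc
      obtain ⟨d, -, rfl⟩ := mem_map.1 hd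
      rw [h.noncrossing a b c d (e.lt_iff_lt.1 hab) (e.lt_iff_lt.1 hbc) (e.lt_iff_lt.1 hcd) V hV W
        hW (hmem.1 ha) (hmem.1 hc) (hmem.1 hb) (hmem.1 hd)]
    · intro V _ x _ y _ s hs
      simp at hs

lemma IsNCFamily.exists_mapBlocks_eq {e : Fin m ↪o Fin n} {P : Finset (Finset (Fin n))}
    (hP : IsNCFamily (univ.map e.toEmbedding) ∅ P) : ∃ Q, mapBlocks e Q = P := by
  refine ⟨univ.filter fun V => V.map e.toEmbedding ∈ P, ?_⟩
  ext B
  rw [mem_mapBlocks]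
  constructor
  · rintro ⟨V, hV, rfl⟩
    exact (mem_filter.1 hV).2
  · intro hB
    obtain ⟨V, -, rfl⟩ := subset_map_iff.1 (hP.subset hB)
    exact ⟨V, mem_filter.2 ⟨mem_univ V, hB⟩, rfl⟩

open Classical in
lemma sum_ncFamilies_map {M : Type*} [AddCommMonoid M] (e : Fin m ↪o Fin n)
    (F : Finset (Finset (Fin n)) → M) :
    ∑ P ∈ ncFamilies (univ.map e.toEmbedding) ∅, F P =
      ∑ π ∈ univ.filter (fun π : NPart m => IsNoncrossing π), F (mapBlocks e π.parts) := by
  symm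
  refine Finset.sum_bij (fun π _ => mapBlocks e π.parts) ?_ ?_ ?_ ?_
  · intro π hπ
    exact mem_ncFamilies.2 (isNCFamily_mapBlocks_iff.2 (isNCFamily_parts (mem_filter.1 hπ).2))
  · intro π _ ρ _ h
    exact Finpartition.ext (mapBlocks_injective e h)
  · intro P hP
    rw [mem_ncFamilies] at hP
    obtain ⟨Q, rfl⟩ := hP.exists_mapBlocks_eq
    obtain ⟨π, hπ, rfl⟩ := (isNCFamily_mapBlocks_iff.1 hP).exists_parts_eq
    exact ⟨π, mem_filter.2 ⟨mem_univ π, hπ⟩, rfl⟩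
  · exact fun _ _ => rfl

lemma nestedIn_map_iff {e : Fin m ↪o Fin n} {B V : Finset (Fin m)} :
    NestedIn (B.map e.toEmbedding) (V.map e.toEmbedding) ↔ NestedIn B V := by
  simp [NestedIn]

lemma nestFactorial_mapBlocks (e : Fin m ↪o Fin n) (P : Finset (Finset (Fin m))) :
    nestFactorial (mapBlocks e P) = nestFactorial P := by
  classical
  rw [nestFactorial, mapBlocks, prod_map]
  refine Finset.prod_congr rfl fun V _ => ?_
  rw [nestCard, nestCard, filter_map, card_map]
  congr 1
  exact Finset.filter_congr fun B _ => nestedIn_map_iff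

lemma prod_mapBlocks {A : Type*} (f : List A → ℂ) (a : Fin n → A) (e : Fin m ↪o Fin n)
    (π : NPart m) :
    ∏ V ∈ mapBlocks e π.parts, f ((V.sort (· ≤ ·)).map a) = blockApply f (a ∘ e) π := by
  rw [mapBlocks, prod_map, blockApply]
  refine Finset.prod_congr rfl fun V _ => ?_
  congr 1
  rw [← List.map_map]
  congr 1
  exact (Finset.map_sort _ _ _ _ fun x _ y _ => e.le_iff_le.symm).symm

end Transfer

section Moments

open Finset Polynomial

variable {m n : ℕ} {A : Type*}

/-- Interval partitions are the noncrossing partitions without nestings. -/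
lemma isIntervalPart_iff {π : NPart m} :
    IsIntervalPart π ↔
      IsNoncrossing π ∧ ∀ V ∈ π.parts, ∀ B ∈ π.parts, NestedIn B V → V = B := by
  constructor
  · intro h
    refine ⟨fun a b c d hab hbc _ V hV W hW ha hc hb _ => ?_, fun V hV B hB hBV => ?_⟩
    · exact π.eq_of_mem_parts hV hW (h V hV a ha c hc b hab.le hbc.le) hb
    · obtain ⟨w, hw⟩ := π.nonempty_of_mem_parts hB
      obtain ⟨⟨x, hx, hxw⟩, ⟨y, hy, hwy⟩⟩ := hBV w hw
      exact π.eq_of_mem_parts hV hB (h V hV x hx y hy w hxw hwy) hw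
  · rintro ⟨hπ, h⟩ V hV x hx y hy z hxz hzy
    obtain ⟨B, hB, hz⟩ := π.exists_mem (mem_univ z)
    by_cases hVB : V = B
    · exact hVB ▸ hz
    have hne : ∀ u ∈ V, u ≠ z := by
      rintro u hu rfl
      exact hVB (π.eq_of_mem_parts hV hB hu hz)
    exact absurd (h V hV B hB ((isNCFamily_parts hπ).nestedIn_of_between hB hV hx hy hz
      (lt_of_le_of_ne hxz (hne x hx)) (lt_of_le_of_ne hzy (hne y hy).symm))) hVB

open Classical in
lemma eval_one_orderWeight (P : Finset (Finset (Fin n))) :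
    (orderWeight P).eval 1 = if ∀ V ∈ P, ∀ B ∈ P, NestedIn B V → V = B then 1 else 0 := by
  have h1 := eval_orderWeight P 1
  rw [Nat.cast_one] at h1
  rw [h1]
  split_ifs with h
  · rw [Nat.cast_eq_one, Finset.card_eq_one]
    refine ⟨0, Finset.eq_singleton_iff_unique_mem.2 ⟨mem_strictMaps.2 ⟨by simp, by simp, ?_⟩, ?_⟩⟩
    · exact fun V hV B hB hBV hne => absurd (h V hV B hB hBV) hne
    · intro c hc
      obtain ⟨hc1, hc2, -⟩ := mem_strictMaps.1 hc
      funext V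
      by_cases hV : V ∈ P
      · exact Nat.lt_one_iff.1 (hc1 V hV)
      · exact hc2 V hV
  · rw [Nat.cast_eq_zero, Finset.card_eq_zero]
    refine Finset.eq_empty_of_forall_notMem fun c hc => h fun V hV B hB hBV => ?_
    obtain ⟨hc1, -, hc3⟩ := mem_strictMaps.1 hc
    by_contra hne
    have := hc3 V hV B hB hBV hne
    have := hc1 B hB
    omega

/-- The functional on blocks given by evaluating `f` on the word of letters `a` of the block. -/
def wordFunctional (f : List A → ℂ) (a : Fin n → A) (V : Finset (Fin n)) : ℂ :=
  f ((V.sort (· ≤ ·)).map a)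

lemma finsum_mem_setOf {α M : Type*} [Fintype α] [AddCommMonoid M] (p : α → Prop)
    [DecidablePred p] (f : α → M) : ∑ᶠ x ∈ {x | p x}, f x = ∑ x ∈ univ.filter p, f x := by
  rw [← finsum_mem_coe_finset]
  simp

lemma eval_one_ncSum_forestWeight [Ring A] {φ : A → ℂ} {h : List A → ℂ} (hh : MonotoneMC φ h)
    (hm : 1 ≤ m) (a : Fin n → A) (e : Fin m ↪o Fin n) :
    (ncSum forestWeight (wordFunctional h a) (univ.map e.toEmbedding) ∅).eval 1 =
      φ (List.ofFn (a ∘ e)).prod := by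
  classical
  rw [hh m hm, finsum_mem_setOf, ncSum, eval_finsetSum, sum_ncFamilies_map]
  refine Finset.sum_congr rfl fun π _ => ?_
  have hf : forestFactorial π = nestFactorial π.parts := rfl
  simp only [wordFunctional, prod_mapBlocks, forestWeight, nestFactorial_mapBlocks, hf, eval_mul,
    eval_C, eval_pow, eval_X, one_pow, mul_one]
  exact mul_comm _ _

lemma eval_one_ncSum_orderWeight [Ring A] {φ : A → ℂ} {b : List A → ℂ} (hb : BooleanMC φ b)
    (hm : 1 ≤ m) (a : Fin n → A) (e : Fin m ↪o Fin n) :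
    (ncSum orderWeight (wordFunctional b a) (univ.map e.toEmbedding) ∅).eval 1 =
      φ (List.ofFn (a ∘ e)).prod := by
  classical
  have hnest : ∀ π : NPart m, (∀ V ∈ mapBlocks e π.parts, ∀ B ∈ mapBlocks e π.parts,
      NestedIn B V → V = B) ↔ ∀ V ∈ π.parts, ∀ B ∈ π.parts, NestedIn B V → V = B := by
    intro π
    simp only [mapBlocks, forall_mem_map]
    simp [nestedIn_map_iff]
  rw [hb m hm, finsum_mem_setOf, ncSum, eval_finsetSum, sum_ncFamilies_map]
  simp only [wordFunctional, prod_mapBlocks, eval_mul, eval_C, eval_one_orderWeight, hnest, mul_ite,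
    mul_one, mul_zero]
  rw [← Finset.sum_filter, Finset.filter_filter]
  simp_rw [isIntervalPart_iff]

lemma omegaNest_eq_coeff_one (π : NPart n) : omegaNest π = (orderWeight π.parts).coeff 1 :=
  (coeff_one_orderWeight π.parts).symm

/-- The Murua coefficient of a reducible noncrossing partition vanishes. -/
lemma omegaNest_eq_zero (hn : 1 ≤ n) {π : NPart n} (hπ : IsNoncrossing π)
    (hirr : ¬ IsIrreducibleNC π) : omegaNest π = 0 := by
  have hP := isNCFamily_parts hπ
  obtain ⟨V, hV, h0⟩ := π.exists_mem (mem_univ (⟨0, hn⟩ : Fin n))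
  have hVn := π.nonempty_of_mem_parts hV
  have hmem := V.max'_mem hVn
  set s := V.max' hVn with hs
  have hlast : (⟨n - 1, by omega⟩ : Fin n) ∉ V := by
    refine fun hl => hirr ⟨V, hV, fun i hi => ?_, fun i hi => ?_⟩
    · convert h0
    · convert hl
  rw [omegaNest_eq_coeff_one]
  refine isTreeWeight_orderWeight.coeff_one_of_split hP s (fun B hB => ?_)
    ⟨s, mem_univ s, le_rfl⟩ ⟨⟨n - 1, by omega⟩, mem_univ _, ?_⟩
  · by_contra! hcon
    obtain ⟨⟨y, hy, hsy⟩, ⟨x, hx, hxs⟩⟩ := hcon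
    have hyV : y ∉ V := fun h => absurd (V.le_max' y h) (not_le.2 hsy)
    have hVB : V ≠ B := fun h => hyV (h ▸ hy)
    have hne : ∀ u ∈ V, u ≠ x := by
      rintro u hu rfl
      exact hVB (π.eq_of_mem_parts hV hB hu hx)
    have h0x : (⟨0, hn⟩ : Fin n) < x :=
      lt_of_le_of_ne (Fin.mk_le_of_le_val (Nat.zero_le _)) (hne _ h0)
    exact hVB (hπ _ x s y h0x (lt_of_le_of_ne hxs (hne s hmem).symm) hsy V hV B hB h0 hmem hx hy)
  · refine lt_of_le_of_ne (Fin.le_def.2 ?_) fun h => hlast (h ▸ hmem)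
    have := s.2
    simp only
    omega

lemma coeff_one_ncSum_forestWeight (hn : 1 ≤ n) (f : Finset (Fin n) → ℂ) :
    (ncSum forestWeight f univ ∅).coeff 1 = f univ := by
  have hmem : IsNCFamily univ ∅ {(univ : Finset (Fin n))} := by
    constructor
    · intro B hB
      rw [mem_singleton.1 hB]
      exact ⟨⟨0, hn⟩, mem_univ _⟩
    all_goals simp [Unsplit]
  rw [ncSum, finsetSum_coeff, Finset.sum_eq_single_of_mem {univ} (mem_ncFamilies.2 hmem)]
  · simp [coeff_one_forestWeight]
  · intro P hP hne
    rw [coeff_C_mul, coeff_one_forestWeight, if_neg, mul_zero]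
    intro h1
    obtain ⟨V, rfl⟩ := Finset.card_eq_one.1 h1
    refine hne (congrArg _ (Finset.eq_univ_of_forall fun x => ?_))
    simpa using ((mem_ncFamilies.1 hP).mem_iff x).1 (mem_univ x)

end Moments

/-- Monotone cumulants in terms of Boolean cumulants:
`h_n(a_1,…,a_n) = Σ_{π ∈ NC_irr(n)} ω(t(π)) b_π(a_1,…,a_n)`. -/
theorem monotone_cumulants_eq_sum_boolean_cumulants
    (A : Type*) [Ring A] [Algebra ℂ A] (φ : A →ₗ[ℂ] ℂ) (hφ : φ 1 = 1)
    (h : List A → ℂ) (hmch : MonotoneMC (fun x => φ x) h)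
    (b : List A → ℂ) (hmcb : BooleanMC (fun x => φ x) b)
    (n : ℕ) (hn : 1 ≤ n) (a : Fin n → A) :
    h (List.ofFn a) =
      ∑ᶠ π ∈ {π : NPart n | IsNoncrossing π ∧ IsIrreducibleNC π},
        omegaNest π * blockApply b a π := by
  classical
  have hsum := isTreeWeight_forestWeight.ncSum_eq isTreeWeight_orderWeight
    (f := wordFunctional h a) (f' := wordFunctional b a) (fun U hU => by
      have hU' : Finset.univ.map (U.orderEmbOfFin rfl).toEmbedding = U :=
        U.map_orderEmbOfFin_univ rfl
      have hcard : 1 ≤ U.card := Finset.card_pos.2 hU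
      rw [← hU', eval_one_ncSum_forestWeight hmch hcard, eval_one_ncSum_orderWeight hmcb hcard])
    Finset.univ ∅ (Finset.disjoint_empty_right _)
  have hmap : (Finset.univ : Finset (Fin n)) =
      Finset.univ.map (OrderIso.refl (Fin n)).toOrderEmbedding.toEmbedding := by
    ext x
    simp
  have hblocks : ∀ π : NPart n,
      mapBlocks (OrderIso.refl (Fin n)).toOrderEmbedding π.parts = π.parts := by
    intro π
    ext B
    rw [mem_mapBlocks]
    have hV : ∀ V : Finset (Fin n),
        V.map (OrderIso.refl (Fin n)).toOrderEmbedding.toEmbedding = V := by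
      intro V
      ext x
      simp
    simp [hV]
  have hword : wordFunctional h a Finset.univ = h (List.ofFn a) := by
    rw [wordFunctional, Fin.sort_univ, List.ofFn_eq_map]
  rw [← hword, ← coeff_one_ncSum_forestWeight hn (wordFunctional h a), hsum, ncSum,
    Polynomial.finsetSum_coeff, hmap, sum_ncFamilies_map, finsum_mem_setOf, ← Finset.filter_filter]
  symm
  rw [Finset.sum_filter_of_ne]
  · refine Finset.sum_congr rfl fun π _ => ?_
    rw [hblocks, Polynomial.coeff_C_mul, omegaNest_eq_coeff_one, mul_comm]
    rfl
  · intro π hπ hne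
    by_contra hirr
    rw [omegaNest_eq_zero hn (Finset.mem_filter.1 hπ).2 hirr, zero_mul] at hne
    exact hne rfl
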